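/- Let 𝒜 be a type and W = 𝒜* the free monoid of words over 𝒜. Let T_α, T_β be sets with ternary relations E_α, E_β, and let E be a ternary relation on T_β × T_α satisfying the compatibility law: E_α A B C implies E (D,A) (D,B) (D,C) for every D ∈ T_β. Then for all languages 𝓚, 𝓛 ⊆ W × T_α and 𝓜 ⊆ W × T_β: 𝓜 ⊙ (𝓚 ⊔ 𝓛) = (𝓜 ⊙ 𝓚) ⊔ (𝓜 ⊙ 𝓛), where ⊔ is the logical join (logical closure of the union) and ⊙ is the logical concatenation (logical closure, with respect to E, of the concatenation language). -/

import Mathlib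

/-! Each side is the least `E`-closed language containing a given set, so it
suffices that each generating set lies in the other side. The step with content is
`catLang_lclosureLang_subset`: for fixed
`(u, D) ∈ M`, the set of `(v, A)` with `(u * v, (D, A))` in an `E`-closed language is `Eα`-closed by
the compatibility law, so it contains the closure of `K ∪ L` as soon as it contains `K ∪ L`. -/

/-- A language `𝓛 ⊆ W × T` is logically closed w.r.t. `E` (Definition 3.4). -/
def LClosedLang {W T : Type*} (E : T → T → T → Prop) (L : Set (W × T)) : Prop :=
  ∀ (w : W) (A B C : T), (w, B) ∈ L → (w, C) ∈ L → E A B C → (w, A) ∈ L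

/-- Logical closure of a language. -/
def lclosureLang {W T : Type*} (E : T → T → T → Prop) (L : Set (W × T)) :
    Set (W × T) :=
  ⋂₀ {S : Set (W × T) | L ⊆ S ∧ LClosedLang E S}

/-- Language concatenation over the free monoid of words (Definition 3.2). -/
def catLang {𝒜 Tβ Tα : Type*} (M : Set (FreeMonoid 𝒜 × Tβ))
    (K : Set (FreeMonoid 𝒜 × Tα)) : Set (FreeMonoid 𝒜 × (Tβ × Tα)) :=
  {p | ∃ u v D A, (u, D) ∈ M ∧ (v, A) ∈ K ∧ p = (u * v, (D, A))}

theorem subset_lclosureLang {W T : Type*} (E : T → T → T → Prop) (L : Set (W × T)) :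
    L ⊆ lclosureLang E L :=
  Set.subset_sInter fun _ hS => hS.1

theorem lclosureLang_closed {W T : Type*} (E : T → T → T → Prop) (L : Set (W × T)) :
    LClosedLang E (lclosureLang E L) :=
  fun w A B C hB hC h S hS => hS.2 w A B C (hB S hS) (hC S hS) h

theorem lclosureLang_min {W T : Type*} {E : T → T → T → Prop} {L S : Set (W × T)}
    (hLS : L ⊆ S) (hS : LClosedLang E S) : lclosureLang E L ⊆ S :=
  Set.sInter_subset_of_mem ⟨hLS, hS⟩

theorem catLang_mono_right {𝒜 Tβ Tα : Type*} (M : Set (FreeMonoid 𝒜 × Tβ))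
    {K K' : Set (FreeMonoid 𝒜 × Tα)} (h : K ⊆ K') : catLang M K ⊆ catLang M K' := by
  rintro _ ⟨u, v, D, A, hu, hv, rfl⟩
  exact ⟨u, v, D, A, hu, h hv, rfl⟩

/-- Under the compatibility law, an `E`-closed language containing `M · N` also contains
the concatenation of `M` with the `Eα`-closure of `N`. -/
theorem catLang_lclosureLang_subset {𝒜 Tα Tβ : Type*} {Eα : Tα → Tα → Tα → Prop}
    {E : Tβ × Tα → Tβ × Tα → Tβ × Tα → Prop}
    (hE : ∀ (A B C : Tα) (D : Tβ), Eα A B C → E (D, A) (D, B) (D, C))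
    {N : Set (FreeMonoid 𝒜 × Tα)} {M : Set (FreeMonoid 𝒜 × Tβ)}
    {S : Set (FreeMonoid 𝒜 × (Tβ × Tα))} (hS : LClosedLang E S) (hN : catLang M N ⊆ S) :
    catLang M (lclosureLang Eα N) ⊆ S := by
  rintro _ ⟨u, v, D, A, hu, hv, rfl⟩
  have key : lclosureLang Eα N ⊆ {p | (u * p.1, (D, p.2)) ∈ S} :=
    lclosureLang_min (fun p hp => hN ⟨u, p.1, D, p.2, hu, hp, rfl⟩)
      fun w A B C hB hC h => hS (u * w) (D, A) (D, B) (D, C) hB hC (hE A B C D h)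
  exact key hv

/-- second identity of Lemma 3.1: if `E` is compatible with `E_α`
in the second coordinate, then `𝓜 ⊙ (𝓚 ⊔ 𝓛) = (𝓜 ⊙ 𝓚) ⊔ (𝓜 ⊙ 𝓛)`, where `⊔`
is the logical join and `⊙` the logical concatenation. -/
theorem ocat_join_distrib {𝒜 Tα Tβ : Type*}
    (Eα : Tα → Tα → Tα → Prop) (Eβ : Tβ → Tβ → Tβ → Prop)
    (E : Tβ × Tα → Tβ × Tα → Tβ × Tα → Prop)
    (hE : ∀ (A B C : Tα) (D : Tβ), Eα A B C → E (D, A) (D, B) (D, C))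
    (K L : Set (FreeMonoid 𝒜 × Tα)) (M : Set (FreeMonoid 𝒜 × Tβ)) :
    lclosureLang E (catLang M (lclosureLang Eα (K ∪ L))) =
      lclosureLang E (lclosureLang E (catLang M K) ∪ lclosureLang E (catLang M L)) := by
  apply Set.Subset.antisymm
  · refine lclosureLang_min (catLang_lclosureLang_subset hE (lclosureLang_closed _ _) ?_)
      (lclosureLang_closed _ _)
    rintro _ ⟨u, v, D, A, hu, hv | hv, rfl⟩
    · exact subset_lclosureLang _ _
        (Or.inl (subset_lclosureLang _ _ ⟨u, v, D, A, hu, hv, rfl⟩))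
    · exact subset_lclosureLang _ _
        (Or.inr (subset_lclosureLang _ _ ⟨u, v, D, A, hu, hv, rfl⟩))
  · have mono : ∀ N ⊆ K ∪ L, lclosureLang E (catLang M N) ⊆
        lclosureLang E (catLang M (lclosureLang Eα (K ∪ L))) := fun N hN =>
      lclosureLang_min ((catLang_mono_right M (hN.trans (subset_lclosureLang _ _))).trans
        (subset_lclosureLang _ _)) (lclosureLang_closed _ _)
    exact lclosureLang_min
      (Set.union_subset (mono K Set.subset_union_left) (mono L Set.subset_union_right))
      (lclosureLang_closed _ _)
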